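/- If the invertible RDS φ on 𝕊¹ is stably synchronising, then for ℙ-almost every ω∈Ω_c the crack point r̃(ω) is a repulsive crack point of ω, i.e. the equivalence relation x∼_ω y ⇔ d(φ(t,ω)x,φ(t,ω)y)→0 as t→∞ has exactly the two equivalence classes {r̃(ω)} and 𝕊¹∖{r̃(ω)}. -/

import Mathlib

open MeasureTheory Filter Topology Set ENNReal

noncomputable section

/-- The natural projection `π : ℝ → 𝕊¹ = ℝ/ℤ`. -/
def circleProj (x : ℝ) : UnitAddCircle := (x : UnitAddCircle)

/-- `f` is an orientation-preserving homeomorphism of the circle: it admits a strictly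
monotone degree-one lift. -/
def OrientPreserving (f : UnitAddCircle ≃ₜ UnitAddCircle) : Prop :=
  ∃ F : ℝ → ℝ, StrictMono F ∧ (∀ x : ℝ, F (x + 1) = F x + 1) ∧
    ∀ x : ℝ, f (circleProj x) = circleProj (F x)

/-- The anticlockwise distance `d₊(x,y) = min {r ≥ 0 : π(x' + r) = y}` (`x'` any lift of `x`). -/
def dPlus (x y : UnitAddCircle) : ℝ :=
  sInf {r : ℝ | 0 ≤ r ∧ ∃ x' : ℝ, circleProj x' = x ∧ circleProj (x' + r) = y}

/-- An invertible random dynamical system on the circle, in discrete or continuous time,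
driven by a stationary memoryless noise process. -/
structure RDS (Ω : Type) [m : MeasurableSpace Ω] where
  /-- the time set `𝕋⁺`: either `ℕ ∪ {0}` or `[0,∞)`, viewed inside `ℝ` -/
  T : Set ℝ
  T_cases : T = Set.range (fun n : ℕ => (n : ℝ)) ∨ T = Set.Ici (0 : ℝ)
  /-- the filtration -/
  F : ℝ → MeasurableSpace Ω
  F_le : ∀ t ∈ T, F t ≤ m
  F_mono : ∀ s ∈ T, ∀ t ∈ T, s ≤ t → F s ≤ F t
  /-- the probability measure -/
  P : Measure Ω
  P_prob : IsProbabilityMeasure P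
  /-- the time-shift maps on the noise space -/
  θ : ℝ → Ω → Ω
  θ_zero : θ 0 = id
  θ_add : ∀ s ∈ T, ∀ t ∈ T, θ (s + t) = θ t ∘ θ s
  θ_preserving : ∀ t ∈ T, MeasurePreserving (θ t) P P
  θ_adapted : ∀ s ∈ T, ∀ t ∈ T, @Measurable Ω Ω (F (s + t)) (F s) (θ t)
  θ_indep : ∀ t ∈ T, ∀ E A : Set Ω, MeasurableSet[F t] E →
    MeasurableSet[⨆ s ∈ T, F s] A → P (E ∩ θ t ⁻¹' A) = P E * P A
  /-- the random homeomorphisms -/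
  φ : ℝ → Ω → UnitAddCircle ≃ₜ UnitAddCircle
  φ_orient : ∀ t ∈ T, ∀ ω, OrientPreserving (φ t ω)
  φ_meas : ∀ t ∈ T, @Measurable (Ω × UnitAddCircle) UnitAddCircle
    ((F t).prod inferInstance) inferInstance (fun p => φ t p.1 p.2)
  φ_zero : ∀ ω, φ 0 ω = Homeomorph.refl UnitAddCircle
  φ_cocycle : ∀ s ∈ T, ∀ t ∈ T, ∀ ω x, φ (s + t) ω x = φ t (θ s ω) (φ s ω x)
  φ_cadlag_right : ∀ ω, ∀ t ∈ T, ∀ tn : ℕ → ℝ, (∀ n, tn n ∈ T) → Antitone tn →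
    Tendsto tn atTop (𝓝 t) → ∀ (xn : ℕ → UnitAddCircle) (x : UnitAddCircle),
      Tendsto xn atTop (𝓝 x) →
      Tendsto (fun n => φ (tn n) ω (xn n)) atTop (𝓝 (φ t ω x))
  /-- the left-limit maps -/
  φ_left_lim : ℝ → Ω → UnitAddCircle → UnitAddCircle
  φ_cadlag_left : ∀ ω, ∀ t ∈ T, ∀ tn : ℕ → ℝ, (∀ n, tn n ∈ T) → StrictMono tn →
    Tendsto tn atTop (𝓝 t) → ∀ (xn : ℕ → UnitAddCircle) (x : UnitAddCircle),
      Tendsto xn atTop (𝓝 x) →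
      Tendsto (fun n => φ (tn n) ω (xn n)) atTop (𝓝 (φ_left_lim t ω x))

/-- A probability measure on the circle is atomless if every singleton is null. -/
def Atomless (ρ : Measure UnitAddCircle) : Prop := ∀ x, ρ {x} = 0

/-- A measure on the circle has full support. -/
def FullSupport (ρ : Measure UnitAddCircle) : Prop :=
  ∀ U : Set UnitAddCircle, IsOpen U → U.Nonempty → 0 < ρ U

/-- The (topological) support of a measure on the circle. -/
def msupport (ρ : Measure UnitAddCircle) : Set UnitAddCircle :=
  {x | ∀ U : Set UnitAddCircle, IsOpen U → x ∈ U → 0 < ρ U}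

namespace RDS

variable {Ω : Type} [m : MeasurableSpace Ω] (S : RDS Ω)

/-- the future σ-algebra `𝓕₊ = σ(𝓕_t : t ∈ 𝕋⁺)`. -/
def Fplus : MeasurableSpace Ω := ⨆ t ∈ S.T, S.F t

/-- The filter "t → ∞ along the time set 𝕋⁺". -/
def tFilter : Filter ℝ := atTop ⊓ 𝓟 S.T

/-- two-point contractibility. -/
def Contractible : Prop := ∀ x y : UnitAddCircle, x ≠ y →
  0 < S.P {ω | ∃ t ∈ S.T, dist (S.φ t ω x) (S.φ t ω y) < dist x y}

/-- compressibility. -/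
def Compressible : Prop := ∀ x y : UnitAddCircle, x ≠ y →
  0 < S.P {ω | ∃ t ∈ S.T, dPlus (S.φ t ω x) (S.φ t ω y) < dPlus x y}

/-- `p` is a deterministic fixed point. -/
def DetFixedPoint (p : UnitAddCircle) : Prop :=
  ∀ᵐ ω ∂S.P, ∀ t ∈ S.T, S.φ t ω p = p

/-- `A` is forward-invariant. -/
def ForwardInvariant (A : Set UnitAddCircle) : Prop :=
  ∀ᵐ ω ∂S.P, ∀ t ∈ S.T, ⇑(S.φ t ω) '' A ⊆ A

/-- reverse-minimal dynamics: the only open forward-invariant sets are `∅` and `𝕊¹`. -/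
def ReverseMinimal : Prop :=
  ∀ A : Set UnitAddCircle, IsOpen A → S.ForwardInvariant A → A = ∅ ∨ A = Set.univ

/-- synchronisation. -/
def Synchronising : Prop := ∀ x y : UnitAddCircle,
  S.P {ω | Tendsto (fun t => dist (S.φ t ω x) (S.φ t ω y)) S.tFilter (𝓝 0)} = 1

/-- everywhere local stability. -/
def EverywhereLocallyStable : Prop := ∀ x : UnitAddCircle,
  S.P {ω | ∃ U : Set UnitAddCircle, IsOpen U ∧ x ∈ U ∧
    Tendsto (fun t => volume (⇑(S.φ t ω) '' U)) S.tFilter (𝓝 0)} = 1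

/-- stable synchronisation. -/
def StablySynchronising : Prop := S.Synchronising ∧ S.EverywhereLocallyStable

/-- `ρ` is reverse-stationary: `ρ(A) = ∫ ρ(φ(t,ω)A) ℙ(dω)` for all `t ∈ 𝕋⁺`, Borel `A`. -/
def ReverseStationary (ρ : Measure UnitAddCircle) : Prop :=
  ∀ t ∈ S.T, ∀ A : Set UnitAddCircle, MeasurableSet A →
    ρ A = ∫⁻ ω, ρ (⇑(S.φ t ω) '' A) ∂S.P

/-- `r` is a crack point of `ω`. -/
def CrackPoint (ω : Ω) (r : UnitAddCircle) : Prop :=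
  ∀ G : Set UnitAddCircle, IsClosed G → r ∉ G →
    Tendsto (fun t => volume (⇑(S.φ t ω) '' G)) S.tFilter (𝓝 0)

/-- the set of contractive sample points. -/
def Ωc : Set Ω := {ω | ∃ r, S.CrackPoint ω r}

/-- the reverse transition probabilities `φ̄ₓᵗ(A) = ℙ(ω : φ(t,ω)⁻¹(x) ∈ A)`. -/
def revTrans (t : ℝ) (x : UnitAddCircle) (A : Set UnitAddCircle) : ℝ≥0∞ :=
  S.P {ω | (S.φ t ω).symm x ∈ A}

/-- the forward transition probabilities `φₓᵗ(A) = ℙ(ω : φ(t,ω)x ∈ A)`. -/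
def fwdTrans (t : ℝ) (x : UnitAddCircle) (A : Set UnitAddCircle) : ℝ≥0∞ :=
  S.P {ω | S.φ t ω x ∈ A}

/-- `ρ` is stationary for a transition family `ν`. -/
def StationaryFor (ν : ℝ → UnitAddCircle → Set UnitAddCircle → ℝ≥0∞)
    (ρ : Measure UnitAddCircle) : Prop :=
  ∀ t ∈ S.T, ∀ A : Set UnitAddCircle, MeasurableSet A → ρ A = ∫⁻ x, ν t x A ∂ρ

/-- `ρ` is ergodic for a transition family `ν`. -/
def ErgodicFor (ν : ℝ → UnitAddCircle → Set UnitAddCircle → ℝ≥0∞)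
    (ρ : Measure UnitAddCircle) : Prop :=
  S.StationaryFor ν ρ ∧ ∀ A : Set UnitAddCircle, MeasurableSet A →
    (∀ t ∈ S.T, ∀ᵐ x ∂ρ, x ∈ A → ν t x A = 1) → ρ A = 0 ∨ ρ A = 1

end RDS

/-!
If `r` is a crack point of `ω`, then the complement of a ball around `r` is an arc whose images
shrink to points, so any two points other than `r` are asymptotic. Hence `r` is repulsive as soon
as one deterministic point `x` is not asymptotic to it. Suppose `x` is asymptotic to `r`. At a
large time `n` the crack point `φ(n,ω)r` of the shifted noise `θⁿω` lies in a small ball around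
`φ(n,ω)x`, whose position is independent of `θⁿω`. Local stability and compactness of the circle
make the probability that the crack point lies in a ball of radius `ε` small as `ε → 0`, uniformly
in the centre of the ball, so this happens with probability zero.
-/

section Circle

open Metric

lemma ediam_le_hausdorffMeasure_one {X : Type*} [MetricSpace X] [MeasurableSpace X]
    [BorelSpace X] {C : Set X} (hC : IsPreconnected C) : ediam C ≤ μH[1] C := by
  refine ediam_le fun a ha b hb => ?_
  have hIcc : Icc 0 (dist a b) ⊆ dist a '' C := by
    have := (hC.image (dist a) (by fun_prop)).Icc_subset (mem_image_of_mem _ ha)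
      (mem_image_of_mem _ hb)
    rwa [dist_self] at this
  calc edist a b = volume (Icc 0 (dist a b)) := by
        rw [Real.volume_Icc, sub_zero, edist_dist]
    _ ≤ μH[1] (dist a '' C) := by
        rw [hausdorffMeasure_real]
        exact measure_mono hIcc
    _ ≤ μH[1] C := by
        simpa using (LipschitzWith.dist_right a).hausdorffMeasure_image_le zero_le_one C

variable {T : ℝ} [hT : Fact (0 < T)]

lemma lipschitzWith_addCircle_coe (T : ℝ) : LipschitzWith 1 ((↑) : ℝ → AddCircle T) :=
  LipschitzWith.of_dist_le_mul fun s t => by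
    rw [NNReal.coe_one, one_mul, dist_eq_norm, dist_eq_norm, ← AddCircle.coe_sub]
    exact QuotientAddGroup.norm_mk_le_norm

lemma hausdorffMeasure_one_le_volume : (μH[1] : Measure (AddCircle T)) ≤ volume := by
  refine Measure.le_iff.2 fun s hs => ?_
  have hmk := AddCircle.measurePreserving_mk T 0
  set A : Set ℝ := ((↑) : ℝ → AddCircle T) ⁻¹' s ∩ Ioc 0 (0 + T)
  have hA : s = ((↑) : ℝ → AddCircle T) '' A := by
    rw [image_preimage_inter, AddCircle.coe_image_Ioc_eq, inter_univ]
  calc μH[1] s = μH[1] (((↑) : ℝ → AddCircle T) '' A) := by rw [← hA]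
    _ ≤ μH[1] A := by
      simpa using (lipschitzWith_addCircle_coe T).hausdorffMeasure_image_le zero_le_one A
    _ = volume s := by
      rw [hausdorffMeasure_real, ← hmk.measure_preimage hs.nullMeasurableSet,
        Measure.restrict_apply (hmk.measurable hs)]

lemma ediam_le_volume_of_isPreconnected {C : Set (AddCircle T)} (hC : IsPreconnected C) :
    ediam C ≤ volume C :=
  (ediam_le_hausdorffMeasure_one hC).trans (hausdorffMeasure_one_le_volume C)

lemma volume_le_two_mul_ediam (s : Set (AddCircle T)) : volume s ≤ 2 * ediam s := by
  rcases s.eq_empty_or_nonempty with rfl | ⟨a, ha⟩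
  · simp
  have hsub : s ⊆ closedBall a (diam s) := fun b hb =>
    dist_le_diam_of_mem (isBounded_of_compactSpace) hb ha
  calc volume s ≤ ENNReal.ofReal (min T (2 * diam s)) :=
        (measure_mono hsub).trans_eq (AddCircle.volume_closedBall T _)
    _ ≤ ENNReal.ofReal (2 * diam s) := ENNReal.ofReal_le_ofReal (min_le_right _ _)
    _ ≤ 2 * ediam s := by
      rw [ENNReal.ofReal_mul zero_le_two, ENNReal.ofReal_ofNat]
      gcongr
      exact ENNReal.ofReal_toReal_le

lemma norm_addCircle_coe_of_mem_Icc {s : ℝ} (hs : s ∈ Icc 0 T) :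
    ‖(s : AddCircle T)‖ = min s (T - s) := by
  have hT₀ := hT.out
  rcases le_total s (T - s) with h | h
  · rw [min_eq_left h, (AddCircle.norm_coe_eq_abs_iff T hT₀.ne').2, abs_of_nonneg hs.1]
    rw [abs_of_nonneg hs.1, abs_of_pos hT₀]
    linarith
  · have hsub : 0 ≤ T - s := sub_nonneg.2 hs.2
    have hneg : ((T - s : ℝ) : AddCircle T) = -s := by
      rw [AddCircle.coe_sub, AddCircle.coe_period, zero_sub]
    rw [min_eq_right h, ← norm_neg, ← hneg, (AddCircle.norm_coe_eq_abs_iff T hT₀.ne').2,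
      abs_of_nonneg hsub]
    rw [abs_of_nonneg hsub, abs_of_pos hT₀]
    linarith

lemma isPreconnected_compl_ball (y : AddCircle T) (δ : ℝ) : IsPreconnected (ball y δ)ᶜ := by
  let arc : ℝ → AddCircle T := fun s => y + s
  have harc : arc '' Icc 0 T = univ := by
    have h := AddCircle.coe_image_Icc_eq T 0
    rw [zero_add] at h
    rw [← image_image (y + ·), h, image_univ_of_surjective (add_left_surjective y)]
  have hpre : Icc 0 T ∩ arc ⁻¹' (ball y δ)ᶜ = Icc 0 T ∩ Icc δ (T - δ) := by
    ext s
    refine and_congr_right fun hs => ?_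
    simp only [arc, mem_preimage, mem_compl_iff, mem_ball, not_lt, dist_self_add_left,
      norm_addCircle_coe_of_mem_Icc hs, le_min_iff, mem_Icc, le_sub_comm]
  rw [← univ_inter (ball y δ)ᶜ, ← harc, ← image_inter_preimage, hpre]
  exact (ordConnected_Icc.inter ordConnected_Icc).isPreconnected.image arc (by fun_prop)

end Circle

section Measure

open Metric

lemma measurable_ediam_image {Ω X Y : Type*} {_ : MeasurableSpace Ω} [TopologicalSpace X]
    [TopologicalSpace.PseudoMetrizableSpace X] [TopologicalSpace.SeparableSpace X]
    [PseudoEMetricSpace Y] [SecondCountableTopology Y] [MeasurableSpace Y]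
    [OpensMeasurableSpace Y] {f : Ω → X → Y} (hcont : ∀ ω, Continuous (f ω))
    (hmeas : ∀ x, Measurable fun ω => f ω x) (s : Set X) :
    Measurable fun ω => ediam (f ω '' s) := by
  obtain ⟨t, hts, htc, hst⟩ :=
    (TopologicalSpace.IsSeparable.of_separableSpace s).exists_countable_dense_subset
  have hdense : ∀ ω, ediam (f ω '' s) = ⨆ x ∈ t, ⨆ y ∈ t, edist (f ω x) (f ω y) := fun ω => by
    have hle : ediam (f ω '' s) ≤ ediam (f ω '' t) := by
      rw [← ediam_closure (f ω '' t)]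
      exact ediam_mono ((image_mono hst).trans (image_closure_subset_closure_image (hcont ω)))
    rw [hle.antisymm (ediam_mono (image_mono hts)), ediam, iSup_image]
    simp only [iSup_image]
  simp only [hdense]
  exact .biSup t htc fun x _ => .biSup t htc fun y _ => (hmeas x).edist (hmeas y)

lemma exists_measurable_nat_dist_lt (X : Type*) [PseudoMetricSpace X] [Nonempty X]
    [TopologicalSpace.SeparableSpace X] [MeasurableSpace X] [OpensMeasurableSpace X]
    {ε : ℝ} (hε : 0 < ε) :
    ∃ (D : ℕ → X) (κ : X → ℕ), Measurable κ ∧ ∀ x, dist x (D (κ x)) < ε := by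
  classical
  have hdense := fun x => (TopologicalSpace.denseRange_denseSeq X).exists_dist_lt x hε
  exact ⟨TopologicalSpace.denseSeq X, fun x => Nat.find (hdense x),
    measurable_find hdense fun _ => measurableSet_ball, fun x => Nat.find_spec (hdense x)⟩

variable {Ω : Type*} [MeasurableSpace Ω] {μ : Measure Ω}

lemma measure_setOf_eventually_mem_le {s : ℕ → Set Ω} {c : ℝ≥0∞} (h : ∀ n, μ (s n) ≤ c) :
    μ {ω | ∀ᶠ n in atTop, ω ∈ s n} ≤ c := by
  have hUnion : {ω | ∀ᶠ n in atTop, ω ∈ s n} = ⋃ N, ⋂ n ≥ N, s n := by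
    ext ω
    simp
  have hmono : Monotone fun N => ⋂ n ≥ N, s n := fun _ _ hNM =>
    biInter_mono (fun _ hn => hNM.trans hn) fun _ _ => Subset.rfl
  rw [hUnion, hmono.measure_iUnion]
  exact iSup_le fun N => (measure_mono (iInter₂_subset N le_rfl)).trans (h N)

variable [IsFiniteMeasure μ] {X : Type*} [PseudoMetricSpace X] {E : Set X → Set Ω}

lemma exists_measure_ball_lt (hE : Monotone E) (hmeas : ∀ V, MeasurableSet (E V)) {y : X}
    (hy : ∀ᵐ ω ∂μ, ∃ k : ℕ, ω ∉ E (ball y (1 / (k + 1)))) {c : ℝ≥0∞} (hc : 0 < c) :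
    ∃ δ > 0, μ (E (ball y δ)) < c := by
  have hzero : μ (⋂ k : ℕ, E (ball y (1 / (k + 1)))) = 0 := by
    rw [measure_eq_zero_iff_ae_notMem]
    simpa only [mem_iInter, not_forall] using hy
  have hlim := tendsto_measure_iInter_atTop (μ := μ)
    (fun k : ℕ => (hmeas (ball y (1 / (k + 1)))).nullMeasurableSet)
    (fun _ _ hij => hE (ball_subset_ball (Nat.one_div_le_one_div hij))) ⟨0, measure_ne_top _ _⟩
  rw [hzero] at hlim
  obtain ⟨k, hk⟩ := (hlim.eventually_lt_const hc).exists
  exact ⟨_, Nat.one_div_pos_of_nat, hk⟩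

lemma exists_forall_measure_ball_le [CompactSpace X] (hE : Monotone E)
    (hmeas : ∀ V, MeasurableSet (E V))
    (h : ∀ y, ∀ᵐ ω ∂μ, ∃ k : ℕ, ω ∉ E (ball y (1 / (k + 1)))) {c : ℝ≥0∞} (hc : 0 < c) :
    ∃ ε > 0, ∀ x, μ (E (ball x ε)) ≤ c := by
  choose δ hδ hδc using fun y => exists_measure_ball_lt hE hmeas (h y) hc
  obtain ⟨ε, hε, hcover⟩ := lebesgue_number_lemma_of_metric isCompact_univ
    (fun y => isOpen_ball (x := y) (ε := δ y)) fun y _ => mem_iUnion.2 ⟨y, mem_ball_self (hδ y)⟩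
  refine ⟨ε, hε, fun x => ?_⟩
  obtain ⟨y, hy⟩ := hcover x (mem_univ x)
  exact (measure_mono (hE hy)).trans (hδc y).le

end Measure

namespace RDS

variable {Ω : Type} [MeasurableSpace Ω] {S : RDS Ω} {ω : Ω}

instance : IsProbabilityMeasure S.P := S.P_prob

section Time

variable (S)

lemma natCast_mem_T (n : ℕ) : (n : ℝ) ∈ S.T := by
  rcases S.T_cases with hT | hT <;> rw [hT]
  · exact mem_range_self n
  · exact mem_Ici.2 (Nat.cast_nonneg (α := ℝ) n)

lemma tendsto_natCast_tFilter : Tendsto (fun n : ℕ => (n : ℝ)) atTop S.tFilter :=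
  tendsto_inf.2 ⟨tendsto_natCast_atTop_atTop (R := ℝ),
    tendsto_principal.2 (.of_forall S.natCast_mem_T)⟩

variable {S}

lemma add_mem_T {s t : ℝ} (hs : s ∈ S.T) (ht : t ∈ S.T) : s + t ∈ S.T := by
  rcases S.T_cases with hT | hT <;> rw [hT] at hs ht ⊢
  · obtain ⟨a, rfl⟩ := hs
    obtain ⟨b, rfl⟩ := ht
    exact ⟨a + b, Nat.cast_add a b⟩
  · exact mem_Ici.2 (add_nonneg (mem_Ici.1 hs) (mem_Ici.1 ht))

lemma tendsto_const_add_tFilter {s : ℝ} (hs : s ∈ S.T) :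
    Tendsto (s + ·) S.tFilter S.tFilter :=
  (tendsto_atTop_add_const_left atTop s tendsto_id).inf
    (tendsto_principal_principal.2 fun _ ht => add_mem_T hs ht)

end Time

section Asymptotics

/-- The relation `x ∼_ω y`: the trajectories of `x` and `y` under `ω` approach each other. -/
def Asymptotic (S : RDS Ω) (ω : Ω) (x y : UnitAddCircle) : Prop :=
  Tendsto (fun t => dist (S.φ t ω x) (S.φ t ω y)) S.tFilter (𝓝 0)

/-- The defining property of a repulsive crack point: the classes of `∼_ω` are exactly `{r}` and
its complement. That `r` is a crack point is not part of the definition. -/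
def Repulsive (S : RDS Ω) (ω : Ω) (r : UnitAddCircle) : Prop :=
  (∀ x, x ≠ r → ¬ S.Asymptotic ω x r) ∧ ∀ x y, x ≠ r → y ≠ r → S.Asymptotic ω x y

lemma Asymptotic.refl (x : UnitAddCircle) : S.Asymptotic ω x x := by
  simp only [Asymptotic, dist_self, tendsto_const_nhds]

lemma Asymptotic.trans {x y z : UnitAddCircle} (hxy : S.Asymptotic ω x y)
    (hyz : S.Asymptotic ω y z) : S.Asymptotic ω x z :=
  squeeze_zero (fun _ => dist_nonneg) (fun _ => dist_triangle _ _ _)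
    (by simpa only [add_zero] using hxy.add hyz)

end Asymptotics

section CrackPoint

variable {r : UnitAddCircle}

lemma CrackPoint.tendsto_ediam_compl_ball (hr : S.CrackPoint ω r) {y : UnitAddCircle} {δ : ℝ}
    (hry : r ∈ Metric.ball y δ) :
    Tendsto (fun t => Metric.ediam (S.φ t ω '' (Metric.ball y δ)ᶜ)) S.tFilter (𝓝 0) :=
  tendsto_of_tendsto_of_tendsto_of_le_of_le tendsto_const_nhds
    (hr _ Metric.isOpen_ball.isClosed_compl (notMem_compl_iff.2 hry)) (fun _ => zero_le)
    fun t => ediam_le_volume_of_isPreconnected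
      ((isPreconnected_compl_ball y δ).image _ (S.φ t ω).continuous.continuousOn)

lemma CrackPoint.asymptotic (hr : S.CrackPoint ω r) {x y : UnitAddCircle} (hx : x ≠ r)
    (hy : y ≠ r) : S.Asymptotic ω x y := by
  set δ := min (dist x r) (dist y r)
  have hδ : 0 < δ := lt_min (dist_pos.2 hx) (dist_pos.2 hy)
  have hx' : x ∈ (Metric.ball r δ)ᶜ := fun h =>
    (min_le_left (dist x r) (dist y r)).not_gt h
  have hy' : y ∈ (Metric.ball r δ)ᶜ := fun h =>
    (min_le_right (dist x r) (dist y r)).not_gt h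
  have hdist : Tendsto (fun t => edist (S.φ t ω x) (S.φ t ω y)) S.tFilter (𝓝 0) :=
    tendsto_of_tendsto_of_tendsto_of_le_of_le tendsto_const_nhds
      (hr.tendsto_ediam_compl_ball (Metric.mem_ball_self hδ)) (fun _ => zero_le)
      fun _ => Metric.edist_le_ediam_of_mem (mem_image_of_mem _ hx') (mem_image_of_mem _ hy')
  simpa only [Asymptotic, dist_edist, toReal_zero, Function.comp_def] using
    (tendsto_toReal zero_ne_top).comp hdist

lemma CrackPoint.shift (hr : S.CrackPoint ω r) {s : ℝ} (hs : s ∈ S.T) :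
    S.CrackPoint (S.θ s ω) (S.φ s ω r) := by
  intro G hG hrG
  have hlim := (hr (S.φ s ω ⁻¹' G) (hG.preimage (S.φ s ω).continuous) hrG).comp
    (tendsto_const_add_tFilter hs)
  refine hlim.congr' ?_
  filter_upwards [mem_inf_of_right (mem_principal_self S.T)] with t ht
  have hcocycle : ⇑(S.φ (s + t) ω) = S.φ t (S.θ s ω) ∘ S.φ s ω :=
    funext (S.φ_cocycle s hs t ht ω)
  rw [Function.comp_apply, hcocycle, image_comp,
    image_preimage_eq _ (S.φ s ω).surjective]

end CrackPoint

section ContractsOn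

/-- The maps `φ(n,ω)` shrink `G` to a point. Only integer times enter, which keeps the event
`{ω | S.ContractsOn ω G}` measurable. -/
def ContractsOn (S : RDS Ω) (ω : Ω) (G : Set UnitAddCircle) : Prop :=
  Tendsto (fun n : ℕ => Metric.ediam (S.φ n ω '' G)) atTop (𝓝 0)

lemma ContractsOn.mono {G H : Set UnitAddCircle} (hH : S.ContractsOn ω H) (hGH : G ⊆ H) :
    S.ContractsOn ω G :=
  tendsto_of_tendsto_of_tendsto_of_le_of_le tendsto_const_nhds hH (fun _ => zero_le)
    fun _ => Metric.ediam_mono (image_mono hGH)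

lemma ContractsOn.tendsto_volume {G : Set UnitAddCircle} (hG : S.ContractsOn ω G) :
    Tendsto (fun n : ℕ => volume (S.φ n ω '' G)) atTop (𝓝 0) := by
  have hlim := ENNReal.Tendsto.const_mul hG (.inr ofNat_ne_top : _ ∨ (2 : ℝ≥0∞) ≠ ∞)
  rw [mul_zero] at hlim
  exact tendsto_of_tendsto_of_tendsto_of_le_of_le tendsto_const_nhds hlim (fun _ => zero_le)
    fun _ => volume_le_two_mul_ediam _

lemma not_contractsOn_compl {U : Set UnitAddCircle}
    (hU : Tendsto (fun t => volume (S.φ t ω '' U)) S.tFilter (𝓝 0)) :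
    ¬ S.ContractsOn ω Uᶜ := by
  intro hUc
  have hsum := (hU.comp S.tendsto_natCast_tFilter).add hUc.tendsto_volume
  rw [add_zero] at hsum
  obtain ⟨n, hn⟩ := (hsum.eventually_lt_const one_pos).exists
  have huniv : S.φ n ω '' U ∪ S.φ n ω '' Uᶜ = univ := by
    rw [← image_union, union_compl_self, image_univ_of_surjective (S.φ n ω).surjective]
  refine hn.not_ge ?_
  calc (1 : ℝ≥0∞) = volume (S.φ n ω '' U ∪ S.φ n ω '' Uᶜ) := by
        rw [huniv, UnitAddCircle.measure_univ]
    _ ≤ volume (S.φ n ω '' U) + volume (S.φ n ω '' Uᶜ) := measure_union_le _ _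

end ContractsOn

section Measurability

lemma measurable_φ_apply {t : ℝ} (ht : t ∈ S.T) (x : UnitAddCircle) :
    Measurable[S.F t] fun ω => S.φ t ω x :=
  (S.φ_meas t ht).comp (@measurable_prodMk_right Ω UnitAddCircle (S.F t) _ x)

lemma F_le_Fplus {t : ℝ} (ht : t ∈ S.T) : S.F t ≤ S.Fplus :=
  le_iSup₂_of_le t ht le_rfl

variable (S)

lemma Fplus_le : S.Fplus ≤ ‹MeasurableSpace Ω› := iSup₂_le S.F_le

lemma measurableSet_contractsOn (G : Set UnitAddCircle) :
    MeasurableSet[S.Fplus] {ω | S.ContractsOn ω G} := by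
  have hdiam (n : ℕ) : Measurable[S.Fplus] fun ω => Metric.ediam (S.φ n ω '' G) :=
    have hn := S.natCast_mem_T n
    measurable_ediam_image (fun ω => (S.φ n ω).continuous)
      (fun x => (measurable_φ_apply hn x).mono (F_le_Fplus hn) le_rfl) G
  exact measurableSet_tendsto (𝓝 0) hdiam

variable {S}

lemma measure_shift_mem_le {t : ℝ} (ht : t ∈ S.T) {ι : Type*} [Countable ι] [MeasurableSpace ι]
    [MeasurableSingletonClass ι] {κ : Ω → ι} (hκ : Measurable[S.F t] κ) {A : ι → Set Ω}
    (hA : ∀ i, MeasurableSet[S.Fplus] (A i)) {c : ℝ≥0∞} (hc : ∀ i, S.P (A i) ≤ c) :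
    S.P {ω | S.θ t ω ∈ A (κ ω)} ≤ c := by
  have hfiber : ∀ i, MeasurableSet[S.F t] (κ ⁻¹' {i}) := fun i => hκ (measurableSet_singleton i)
  have htotal : ∑' i, S.P (κ ⁻¹' {i}) ≤ 1 := by
    rw [← measure_univ (μ := S.P)]
    exact tsum_measure_le_measure_univ
      (fun i => (S.F_le t ht _ (hfiber i)).nullMeasurableSet)
      fun i j hij => ((disjoint_singleton.2 hij).preimage κ).aedisjoint
  calc S.P {ω | S.θ t ω ∈ A (κ ω)} ≤ S.P (⋃ i, κ ⁻¹' {i} ∩ S.θ t ⁻¹' A i) :=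
        measure_mono fun ω hω => mem_iUnion.2 ⟨κ ω, rfl, hω⟩
    _ ≤ ∑' i, S.P (κ ⁻¹' {i} ∩ S.θ t ⁻¹' A i) := measure_iUnion_le _
    _ = ∑' i, S.P (κ ⁻¹' {i}) * S.P (A i) :=
        tsum_congr fun i => S.θ_indep t ht _ _ (hfiber i) (hA i)
    _ ≤ ∑' i, S.P (κ ⁻¹' {i}) * c := ENNReal.tsum_le_tsum fun i => mul_le_mul_right (hc i) _
    _ = (∑' i, S.P (κ ⁻¹' {i})) * c := ENNReal.tsum_mul_right
    _ ≤ c := mul_le_of_le_one_left' htotal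

end Measurability

lemma EverywhereLocallyStable.ae_exists_not_contractsOn (h : S.EverywhereLocallyStable)
    (y : UnitAddCircle) :
    ∀ᵐ ω ∂S.P, ∃ k : ℕ, ¬ S.ContractsOn ω (Metric.ball y (1 / (k + 1)))ᶜ := by
  have hmeas : MeasurableSet {ω | ∃ k : ℕ, ¬ S.ContractsOn ω (Metric.ball y (1 / (k + 1)))ᶜ} := by
    rw [ofPred_exists]
    exact .iUnion fun k => (S.Fplus_le _ (S.measurableSet_contractsOn _)).compl
  refine (mem_ae_iff_prob_eq_one hmeas).2 (prob_le_one.antisymm ((h y).ge.trans ?_))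
  refine measure_mono ?_
  rintro ω ⟨U, hU, hy, hlim⟩
  obtain ⟨ε, hε, hεU⟩ := Metric.isOpen_iff.1 hU y hy
  obtain ⟨k, hk⟩ := exists_nat_one_div_lt hε
  exact ⟨k, fun hcon => not_contractsOn_compl hlim
    (hcon.mono (compl_subset_compl.2 ((Metric.ball_subset_ball hk.le).trans hεU)))⟩

lemma EverywhereLocallyStable.exists_forall_measure_contractsOn_le
    (h : S.EverywhereLocallyStable) {c : ℝ≥0∞} (hc : 0 < c) :
    ∃ ε > 0, ∀ x, S.P {ω | S.ContractsOn ω (Metric.ball x ε)ᶜ} ≤ c :=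
  exists_forall_measure_ball_le (E := fun V => {ω | S.ContractsOn ω Vᶜ})
    (fun _ _ hVW _ hω => hω.mono (compl_subset_compl.2 hVW))
    (fun _ => S.Fplus_le _ (S.measurableSet_contractsOn _)) h.ae_exists_not_contractsOn hc

lemma CrackPoint.contractsOn_compl_ball {r : UnitAddCircle} (hr : S.CrackPoint ω r)
    {y : UnitAddCircle} {δ : ℝ} (hry : r ∈ Metric.ball y δ) :
    S.ContractsOn ω (Metric.ball y δ)ᶜ :=
  (hr.tendsto_ediam_compl_ball hry).comp S.tendsto_natCast_tFilter

lemma CrackPoint.eventually_contractsOn_shift {r x : UnitAddCircle} (hr : S.CrackPoint ω r)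
    (hxr : S.Asymptotic ω x r) {ε : ℝ} (hε : 0 < ε) {p : UnitAddCircle → UnitAddCircle}
    (hp : ∀ y, dist y (p y) < ε / 2) :
    ∀ᶠ n : ℕ in atTop, S.ContractsOn (S.θ n ω) (Metric.ball (p (S.φ n ω x)) ε)ᶜ := by
  have hlim : Tendsto (fun n : ℕ => dist (S.φ n ω x) (S.φ n ω r)) atTop (𝓝 0) :=
    hxr.comp S.tendsto_natCast_tFilter
  filter_upwards [hlim.eventually_lt_const (half_pos hε)] with n hn
  refine (hr.shift (S.natCast_mem_T n)).contractsOn_compl_ball (Metric.mem_ball.2 ?_)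
  calc dist (S.φ n ω r) (p (S.φ n ω x))
      ≤ dist (S.φ n ω x) (S.φ n ω r) + dist (S.φ n ω x) (p (S.φ n ω x)) :=
        dist_triangle_left _ _ _
    _ < ε / 2 + ε / 2 := add_lt_add hn (hp _)
    _ = ε := add_halves ε

lemma EverywhereLocallyStable.measure_asymptotic_crackPoint_le (h : S.EverywhereLocallyStable)
    (x : UnitAddCircle) {c : ℝ≥0∞} (hc : 0 < c) :
    S.P {ω | ∃ r, S.CrackPoint ω r ∧ S.Asymptotic ω x r} ≤ c := by
  obtain ⟨ε, hε, hsmall⟩ := h.exists_forall_measure_contractsOn_le hc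
  obtain ⟨D, κ, hκ, hκε⟩ := exists_measurable_nat_dist_lt UnitAddCircle (half_pos hε)
  have hshift : ∀ n : ℕ,
      S.P {ω | S.ContractsOn (S.θ n ω) (Metric.ball (D (κ (S.φ n ω x))) ε)ᶜ} ≤ c := fun n =>
    measure_shift_mem_le (S.natCast_mem_T n)
      (κ := fun ω => κ (S.φ n ω x)) (hκ.comp (measurable_φ_apply (S.natCast_mem_T n) x))
      (A := fun i => {ω | S.ContractsOn ω (Metric.ball (D i) ε)ᶜ})
      (fun i => S.measurableSet_contractsOn (Metric.ball (D i) ε)ᶜ) fun i => hsmall (D i)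
  refine (measure_mono ?_).trans (measure_setOf_eventually_mem_le hshift)
  rintro ω ⟨r, hr, hxr⟩
  exact hr.eventually_contractsOn_shift hxr hε (p := D ∘ κ) hκε

lemma EverywhereLocallyStable.ae_not_asymptotic_crackPoint (h : S.EverywhereLocallyStable)
    (x : UnitAddCircle) :
    ∀ᵐ ω ∂S.P, ∀ r, S.CrackPoint ω r → ¬ S.Asymptotic ω x r := by
  have hnull : S.P {ω | ∃ r, S.CrackPoint ω r ∧ S.Asymptotic ω x r} = 0 :=
    nonpos_iff_eq_zero.1 (le_of_forall_gt_imp_ge_of_dense fun _ hc =>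
      h.measure_asymptotic_crackPoint_le x hc)
  filter_upwards [measure_eq_zero_iff_ae_notMem.1 hnull] with ω hω r hr hxr
  exact hω ⟨r, hr, hxr⟩

lemma CrackPoint.repulsive {r z : UnitAddCircle} (hr : S.CrackPoint ω r)
    (hz : ¬ S.Asymptotic ω z r) : S.Repulsive ω r := by
  refine ⟨fun x hx hxr => hz ?_, fun x y => hr.asymptotic⟩
  have hzr : z ≠ r := fun h => hz (h ▸ Asymptotic.refl z)
  exact (hr.asymptotic hzr hx).trans hxr

end RDS

theorem stablySynchronising_crackPoint_repulsive_general
    {Ω : Type} [MeasurableSpace Ω] (S : RDS Ω) (h : S.EverywhereLocallyStable) :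
    ∀ᵐ ω ∂S.P, ∀ r, S.CrackPoint ω r → S.Repulsive ω r :=
  (h.ae_not_asymptotic_crackPoint 0).mono fun _ hω r hr => hr.repulsive (hω r hr)

/-- if `φ` is stably synchronising then almost every contractive `ω` has a
repulsive crack point: the equivalence classes of `∼_ω` are exactly `{r̃(ω)}` and its
complement. -/
theorem stablySynchronising_crackPoint_repulsive
    {Ω : Type} [MeasurableSpace Ω] (S : RDS Ω) (h : S.StablySynchronising)
    (r : Ω → UnitAddCircle) (hr : ∀ ω ∈ S.Ωc, S.CrackPoint ω (r ω)) :
    ∀ᵐ ω ∂S.P, ω ∈ S.Ωc →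
      ((∀ x : UnitAddCircle, x ≠ r ω →
        ¬ Tendsto (fun t => dist (S.φ t ω x) (S.φ t ω (r ω))) S.tFilter (𝓝 0)) ∧
       (∀ x y : UnitAddCircle, x ≠ r ω → y ≠ r ω →
        Tendsto (fun t => dist (S.φ t ω x) (S.φ t ω y)) S.tFilter (𝓝 0))) :=
  (stablySynchronising_crackPoint_repulsive_general S h.2).mono fun ω hω hc => hω (r ω) (hr ω hc)
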